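/- Let N be the even lattice ⟨2⟩ ⊕ U(2) ⊕ E8 of rank 11 and signature (2,9). Then the natural homomorphism O(N) → O(q_N), sending an integral isometry of N to the induced automorphism of the discriminant group A_N preserving the discriminant quadratic form q_N, is surjective. -/

import Mathlib

open Matrix

/-- The hyperbolic plane `U`, with Gram matrix `[[0,1],[1,0]]`. -/
abbrev latU : Matrix (Fin 2) (Fin 2) ℤ := !![0, 1; 1, 0]

/-- The negative definite even unimodular lattice `E₈` (negative of the Cartan matrix). -/
abbrev latE8 : Matrix (Fin 8) (Fin 8) ℤ :=
  !![-2,  0,  1,  0,  0,  0,  0,  0;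
      0, -2,  0,  1,  0,  0,  0,  0;
      1,  0, -2,  1,  0,  0,  0,  0;
      0,  1,  1, -2,  1,  0,  0,  0;
      0,  0,  0,  1, -2,  1,  0,  0;
      0,  0,  0,  0,  1, -2,  1,  0;
      0,  0,  0,  0,  0,  1, -2,  1;
      0,  0,  0,  0,  0,  0,  1, -2]

/-- Orthogonal direct sum of two lattices (block-diagonal Gram matrix). -/
def dsum {a b : ℕ} (A : Matrix (Fin a) (Fin a) ℤ) (B : Matrix (Fin b) (Fin b) ℤ) :
    Matrix (Fin (a + b)) (Fin (a + b)) ℤ :=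
  Matrix.reindex finSumFinEquiv finSumFinEquiv (Matrix.fromBlocks A 0 0 B)


/-- Coordinatewise coercion `ℤⁿ → ℚⁿ` as a `ℤ`-linear map. -/
def castMap (n : ℕ) : (Fin n → ℤ) →ₗ[ℤ] (Fin n → ℚ) :=
  (Algebra.linearMap ℤ ℚ).compLeft (Fin n)

/-- The standard lattice `ℤⁿ ⊆ ℚⁿ`. -/
def intLat (n : ℕ) : Submodule ℤ (Fin n → ℚ) := LinearMap.range (castMap n)

/-- The dual lattice `L* = {x ∈ ℚⁿ : Gx ∈ ℤⁿ}` of the lattice with Gram matrix `G`. -/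
def dualLat {n : ℕ} (G : Matrix (Fin n) (Fin n) ℤ) : Submodule ℤ (Fin n → ℚ) :=
  Submodule.comap ((Matrix.mulVecLin (G.map (Int.cast : ℤ → ℚ))).restrictScalars ℤ) (intLat n)

/-- The discriminant group `A_L = L*/ℤⁿ`. -/
abbrev discGroup {n : ℕ} (G : Matrix (Fin n) (Fin n) ℤ) :=
  dualLat G ⧸ (intLat n).comap (dualLat G).subtype

/-- The class of a dual vector in the discriminant group `A_L`. -/
def dmk {n : ℕ} {G : Matrix (Fin n) (Fin n) ℤ} (x : dualLat G) : discGroup G :=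
  Submodule.Quotient.mk x

/-- The rational quadratic form `x ↦ xᵀGx` on `ℚⁿ`; on the dual lattice of an even lattice,
its reduction mod `2ℤ` is the discriminant quadratic form `q_L`. -/
def qQ {n : ℕ} (G : Matrix (Fin n) (Fin n) ℤ) (x : Fin n → ℚ) : ℚ :=
  x ⬝ᵥ (G.map (Int.cast : ℤ → ℚ)).mulVec x

/-- An automorphism of the discriminant group preserves the discriminant quadratic form
`q_L : A_L → ℚ/2ℤ`. -/
def PreservesDiscForm {n : ℕ} {G : Matrix (Fin n) (Fin n) ℤ}
    (φ : discGroup G ≃+ discGroup G) : Prop :=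
  ∀ x y : dualLat G, φ (dmk x) = dmk y →
    ∃ m : ℤ, qQ G (y : Fin n → ℚ) - qQ G (x : Fin n → ℚ) = 2 * m

/-- `N = ⟨2⟩ ⊕ U(2) ⊕ E8`, an even lattice of rank 11 and signature (2,9). -/
def gramN : Matrix (Fin 11) (Fin 11) ℤ := dsum (dsum !![(2 : ℤ)] (2 • latU)) latE8

/-!
Write `⟨2⟩ ⊕ U(2) = M(2)` with `M = ⟨1⟩ ⊕ U` unimodular. Since `M` and `E₈` are unimodular,
`A_N` is `½M / M ≅ (ℤ/2)³`, with discriminant form `q(a, b, c) = a² / 2 + bc` modulo `2`. Its only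
nonzero isotropic vectors are `(0, 1, 0)` and `(0, 0, 1)`, and `(1, 1, 1)` is its only vector of
norm `3/2`. An automorphism preserving `q` therefore fixes `(1, 1, 1)` and permutes the two
isotropic vectors; as these three vectors generate, it is the identity or the swap of the last two
coordinates. Both are induced by permutations of the basis of `M`, extended by the identity of `E₈`.
-/

section Lattice

variable {n : ℕ} {G : Matrix (Fin n) (Fin n) ℤ}

theorem castMap_mulVec {m : ℕ} (P : Matrix (Fin m) (Fin n) ℤ) (v : Fin n → ℤ) :
    castMap m (P *ᵥ v) = P.map (Int.cast : ℤ → ℚ) *ᵥ castMap n v :=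
  funext (RingHom.map_mulVec (Int.castRingHom ℚ) P v)

theorem castMap_mem_intLat (v : Fin n → ℤ) : castMap n v ∈ intLat n :=
  LinearMap.mem_range_self _ v

theorem mem_dualLat {x : Fin n → ℚ} :
    x ∈ dualLat G ↔ G.map (Int.cast : ℤ → ℚ) *ᵥ x ∈ intLat n :=
  Iff.rfl

theorem dmk_eq_dmk_iff {x y : dualLat G} :
    dmk x = dmk y ↔ (x : Fin n → ℚ) - y ∈ intLat n :=
  Submodule.Quotient.eq _

theorem castMap_mem_dualLat (v : Fin n → ℤ) : castMap n v ∈ dualLat G := by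
  rw [mem_dualLat, ← castMap_mulVec]
  exact castMap_mem_intLat _

theorem dualLat_eq_intLat (hG : IsUnit G.det) : dualLat G = intLat n := by
  refine le_antisymm (fun x hx => ?_) ?_
  · obtain ⟨z, hz⟩ := hx
    have hinv : G⁻¹.map (Int.cast : ℤ → ℚ) * G.map (Int.cast : ℤ → ℚ) = 1 := by
      simpa [nonsing_inv_mul _ hG] using (map_mul (Int.castRingHom ℚ).mapMatrix G⁻¹ G).symm
    have hGz : castMap n (G⁻¹ *ᵥ z) = x := by
      rw [castMap_mulVec, hz]
      simp only [LinearMap.coe_restrictScalars, mulVecLin_apply, mulVec_mulVec, hinv, one_mulVec]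
    exact hGz ▸ castMap_mem_intLat _
  · rintro _ ⟨v, rfl⟩
    exact castMap_mem_dualLat v

theorem map_intCast_nsmul (k : ℕ) :
    (k • G).map (Int.cast : ℤ → ℚ) = k • G.map (Int.cast : ℤ → ℚ) :=
  Matrix.map_smul _ k (map_nsmul (Int.castAddHom ℚ) k) G

theorem mem_dualLat_nsmul {k : ℕ} {x : Fin n → ℚ} :
    x ∈ dualLat (k • G) ↔ k • x ∈ dualLat G := by
  rw [mem_dualLat, mem_dualLat, map_intCast_nsmul, smul_mulVec, mulVec_smul]

theorem qQ_nsmul (k : ℕ) (x : Fin n → ℚ) : qQ (k • G) x = k * qQ G x := by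
  rw [qQ, map_intCast_nsmul, smul_mulVec, dotProduct_smul, nsmul_eq_mul, qQ]

theorem qQ_smul (c : ℚ) (x : Fin n → ℚ) : qQ G (c • x) = c ^ 2 * qQ G x := by
  simp only [qQ, mulVec_smul, dotProduct_smul, smul_dotProduct, smul_eq_mul]
  ring

theorem qQ_castMap (v : Fin n → ℤ) : qQ G (castMap n v) = ((v ⬝ᵥ G *ᵥ v : ℤ) : ℚ) := by
  rw [qQ, ← castMap_mulVec]
  exact (RingHom.map_dotProduct (Int.castRingHom ℚ) v (G *ᵥ v)).symm

end Lattice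

section DirectSum

variable {a b : ℕ} {A P : Matrix (Fin a) (Fin a) ℤ} {B Q : Matrix (Fin b) (Fin b) ℤ}

theorem append_mem_intLat {x : Fin a → ℚ} {y : Fin b → ℚ} :
    Fin.append x y ∈ intLat (a + b) ↔ x ∈ intLat a ∧ y ∈ intLat b := by
  constructor
  · rintro ⟨z, hz⟩
    refine ⟨⟨z ∘ Fin.castAdd b, funext fun i => ?_⟩, ⟨z ∘ Fin.natAdd a, funext fun j => ?_⟩⟩
    · exact (congrFun hz (Fin.castAdd b i)).trans (Fin.append_left x y i)
    · exact (congrFun hz (Fin.natAdd a j)).trans (Fin.append_right x y j)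
  · rintro ⟨⟨v, rfl⟩, ⟨w, rfl⟩⟩
    refine ⟨Fin.append v w, funext fun i => ?_⟩
    induction i using Fin.addCases <;> simp [castMap]

theorem dsum_mulVec_append (x : Fin a → ℚ) (y : Fin b → ℚ) :
    (dsum A B).map (Int.cast : ℤ → ℚ) *ᵥ Fin.append x y =
      Fin.append (A.map (Int.cast : ℤ → ℚ) *ᵥ x) (B.map (Int.cast : ℤ → ℚ) *ᵥ y) := by
  ext i
  induction i using Fin.addCases <;>
    simp [dsum, mulVec, dotProduct, Fin.sum_univ_add]

theorem append_mem_dualLat_dsum {x : Fin a → ℚ} {y : Fin b → ℚ} :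
    Fin.append x y ∈ dualLat (dsum A B) ↔ x ∈ dualLat A ∧ y ∈ dualLat B := by
  simp only [mem_dualLat, dsum_mulVec_append, append_mem_intLat]

theorem qQ_dsum_append (x : Fin a → ℚ) (y : Fin b → ℚ) :
    qQ (dsum A B) (Fin.append x y) = qQ A x + qQ B y := by
  simp only [qQ, dsum_mulVec_append, dotProduct, Fin.sum_univ_add, Fin.append_left,
    Fin.append_right]

theorem transpose_dsum : (dsum P Q)ᵀ = dsum Pᵀ Qᵀ := by
  simp [dsum, transpose_submatrix, fromBlocks_transpose]

theorem dsum_mul_dsum : dsum P Q * dsum A B = dsum (P * A) (Q * B) := by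
  simp [dsum, submatrix_mul_equiv, fromBlocks_multiply]

theorem det_dsum : (dsum A B).det = A.det * B.det := by
  rw [dsum, det_reindex_self, det_fromBlocks_zero₂₁]

end DirectSum

section ScaledUnimodular

variable {a b k : ℕ}

/-- Coordinatewise reduction `ℤᵃ → (ℤ/k)ᵃ`. -/
abbrev reduceMod (k a : ℕ) : (Fin a → ℤ) →+ (Fin a → ZMod k) :=
  (Int.castAddHom (ZMod k)).compLeft (Fin a)

theorem reduceMod_surjective : Function.Surjective (reduceMod k a) :=
  ZMod.intCast_surjective.comp_left

/-- The lift of a vector modulo `k` with entries in `{0, …, k - 1}` (for `k ≠ 0`). -/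
def leastLift (v : Fin a → ZMod k) : Fin a → ℤ :=
  fun i => (v i).val

/-- The residue modulo `2k` of `ṽᵀMṽ`, for `ṽ` the lift of `v` with entries in `{0, …, k - 1}`.
It encodes `k` times the discriminant form of `M(k)`, which takes values in `(1/k)ℤ / 2ℤ`. -/
def normMod (M : Matrix (Fin a) (Fin a) ℤ) (v : Fin a → ZMod k) : ZMod (2 * k) :=
  (leastLift v ⬝ᵥ M *ᵥ leastLift v : ℤ)

variable [NeZero k] {M : Matrix (Fin a) (Fin a) ℤ} {B : Matrix (Fin b) (Fin b) ℤ}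

theorem reduceMod_leastLift (v : Fin a → ZMod k) : reduceMod k a (leastLift v) = v := by
  ext i
  simp [leastLift]

variable (k M B) in
/-- The dual vector `(v / k, 0)` of the lattice `M(k) ⊕ B`. -/
def divVec (v : Fin a → ℤ) : dualLat (dsum (k • M) B) :=
  ⟨Fin.append ((k : ℚ)⁻¹ • castMap a v) 0, by
    rw [append_mem_dualLat_dsum, mem_dualLat_nsmul, ← Nat.cast_smul_eq_nsmul ℚ,
      smul_inv_smul₀ (NeZero.ne _)]
    exact ⟨castMap_mem_dualLat v, zero_mem _⟩⟩

theorem qQ_divVec (v : Fin a → ℤ) :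
    qQ (dsum (k • M) B) (divVec k M B v) = ((v ⬝ᵥ M *ᵥ v : ℤ) : ℚ) / k := by
  have hk : (k : ℚ) ≠ 0 := NeZero.ne _
  have hzero : qQ B 0 = 0 := by rw [qQ, zero_dotProduct]
  rw [divVec, qQ_dsum_append, qQ_nsmul, qQ_smul, qQ_castMap, hzero]
  field_simp
  ring

variable (k M B) in
/-- The homomorphism `v ↦ [(v / k, 0)]` from `ℤᵃ` to the discriminant group of `M(k) ⊕ B`. -/
def divClass : (Fin a → ℤ) →+ discGroup (dsum (k • M) B) :=
  AddMonoidHom.mk' (fun v => dmk (divVec k M B v)) fun v w => by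
    change _ = dmk (divVec k M B v + divVec k M B w)
    congr 1
    ext i
    induction i using Fin.addCases <;> simp [divVec]

theorem dmk_eq_divClass {x : dualLat (dsum (k • M) B)} {v : Fin a → ℤ} {w : Fin b → ℤ}
    (hx : (x : Fin (a + b) → ℚ) = Fin.append ((k : ℚ)⁻¹ • castMap a v) (castMap b w)) :
    dmk x = divClass k M B v := by
  refine dmk_eq_dmk_iff.2 ⟨Fin.append 0 w, funext fun i => ?_⟩
  rw [hx]
  induction i using Fin.addCases <;> simp [divVec, castMap]

theorem exists_eq_append_of_mem_dualLat (hM : IsUnit M.det) (hB : IsUnit B.det)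
    {x : Fin (a + b) → ℚ} (hx : x ∈ dualLat (dsum (k • M) B)) :
    ∃ v w, x = Fin.append ((k : ℚ)⁻¹ • castMap a v) (castMap b w) := by
  rw [← Fin.append_castAdd_natAdd (f := x), append_mem_dualLat_dsum, mem_dualLat_nsmul,
    dualLat_eq_intLat hM, dualLat_eq_intLat hB] at hx
  obtain ⟨⟨v, hv⟩, ⟨w, hw⟩⟩ := hx
  refine ⟨v, w, ?_⟩
  rw [hv, hw, ← Nat.cast_smul_eq_nsmul ℚ, inv_smul_smul₀ (NeZero.ne _),
    Fin.append_castAdd_natAdd]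

theorem divClass_surjective (hM : IsUnit M.det) (hB : IsUnit B.det) :
    Function.Surjective (divClass k M B) := by
  intro u
  obtain ⟨x, rfl⟩ := Submodule.Quotient.mk_surjective _ u
  obtain ⟨v, w, hx⟩ := exists_eq_append_of_mem_dualLat hM hB x.2
  exact ⟨v, (dmk_eq_divClass hx).symm⟩

theorem ker_divClass : (divClass k M B).ker = (reduceMod k a).ker := by
  have hk : (k : ℚ) ≠ 0 := NeZero.ne _
  ext v
  have hdiv : divClass k M B v = 0 ↔ (k : ℚ)⁻¹ • castMap a v ∈ intLat a := by
    refine (Submodule.Quotient.mk_eq_zero _).trans (append_mem_intLat.trans ?_)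
    exact and_iff_left (zero_mem _)
  have hcoord (z : ℤ) (i : Fin a) :
      (z : ℚ) = (k : ℚ)⁻¹ * v i ↔ v i = k * z := by
    rw [eq_inv_mul_iff_mul_eq₀ hk, eq_comm]
    norm_cast
  calc divClass k M B v = 0 ↔ ∃ z : Fin a → ℤ, ∀ i, (z i : ℚ) = (k : ℚ)⁻¹ * v i :=
        hdiv.trans (exists_congr fun _ => funext_iff)
    _ ↔ ∀ i, (k : ℤ) ∣ v i := by
        simp only [hcoord]
        exact (Classical.skolem (p := fun i z => v i = k * z)).symm
    _ ↔ reduceMod k a v = 0 :=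
        (forall_congr' fun i => (ZMod.intCast_zmod_eq_zero_iff_dvd (v i) k).symm).trans
          funext_iff.symm

/-- The isomorphism `(ℤ/k)ᵃ ≃ A_L` for `L = M(k) ⊕ B` with `M` and `B` unimodular,
induced by `v ↦ [(v / k, 0)]`. -/
noncomputable def discEquiv (hM : IsUnit M.det) (hB : IsUnit B.det) :
    (Fin a → ZMod k) ≃+ discGroup (dsum (k • M) B) :=
  (QuotientAddGroup.quotientKerEquivOfSurjective _ reduceMod_surjective).symm.trans <|
    (QuotientAddGroup.quotientAddEquivOfEq ker_divClass.symm).trans <|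
      QuotientAddGroup.quotientKerEquivOfSurjective _ (divClass_surjective hM hB)

theorem discEquiv_reduceMod (hM : IsUnit M.det) (hB : IsUnit B.det) (v : Fin a → ℤ) :
    discEquiv hM hB (reduceMod k a v) = divClass k M B v := by
  have hsymm : (QuotientAddGroup.quotientKerEquivOfSurjective _ reduceMod_surjective).symm
      (reduceMod k a v) = (v : (Fin a → ℤ) ⧸ (reduceMod k a).ker) :=
    (AddEquiv.symm_apply_eq _).2 rfl
  rw [discEquiv, AddEquiv.trans_apply, hsymm]
  rfl

theorem cast_norm_eq_of_preserves {φ : discGroup (dsum (k • M) B) ≃+ discGroup (dsum (k • M) B)}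
    (hφ : PreservesDiscForm φ) {v w : Fin a → ℤ}
    (hvw : φ (divClass k M B v) = divClass k M B w) :
    ((w ⬝ᵥ M *ᵥ w : ℤ) : ZMod (2 * k)) = (v ⬝ᵥ M *ᵥ v : ℤ) := by
  have hk : (k : ℚ) ≠ 0 := NeZero.ne _
  obtain ⟨m, hm⟩ := hφ (divVec k M B v) (divVec k M B w) hvw
  rw [qQ_divVec, qQ_divVec, ← sub_div, div_eq_iff hk] at hm
  refine ((ZMod.intCast_eq_intCast_iff_dvd_sub _ _ _).2 ⟨m, ?_⟩).symm
  have hm' : ((w ⬝ᵥ M *ᵥ w - v ⬝ᵥ M *ᵥ v : ℤ) : ℚ) = ((2 * m * k : ℤ) : ℚ) := by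
    exact_mod_cast hm
  rw [Int.cast_injective hm']
  push_cast
  ring

theorem normMod_discEquiv_symm_of_preserves (hM : IsUnit M.det) (hB : IsUnit B.det)
    {φ : discGroup (dsum (k • M) B) ≃+ discGroup (dsum (k • M) B)} (hφ : PreservesDiscForm φ)
    (v : Fin a → ZMod k) :
    normMod M ((discEquiv hM hB).symm (φ (discEquiv hM hB v))) = normMod M v := by
  refine cast_norm_eq_of_preserves (B := B) hφ ?_
  rw [← discEquiv_reduceMod hM hB, ← discEquiv_reduceMod hM hB, reduceMod_leastLift,
    reduceMod_leastLift, AddEquiv.apply_symm_apply]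

theorem exists_dmk_eq_divClass_mulVec (hM : IsUnit M.det) (hB : IsUnit B.det)
    {P : Matrix (Fin a) (Fin a) ℤ} {x y : dualLat (dsum (k • M) B)}
    (hxy : (y : Fin (a + b) → ℚ) = (dsum P 1).map (Int.cast : ℤ → ℚ) *ᵥ x) :
    ∃ v, dmk x = divClass k M B v ∧ dmk y = divClass k M B (P *ᵥ v) := by
  obtain ⟨v, w, hx⟩ := exists_eq_append_of_mem_dualLat hM hB x.2
  refine ⟨v, dmk_eq_divClass hx, dmk_eq_divClass (w := w) ?_⟩
  rw [hxy, hx, dsum_mulVec_append, mulVec_smul, ← castMap_mulVec, ← castMap_mulVec, one_mulVec]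

end ScaledUnimodular

section OneU

/-- The Gram matrix of the unimodular lattice `⟨1⟩ ⊕ U`, so that `⟨2⟩ ⊕ U(2)` is its scaling
by `2`. -/
def latOneU : Matrix (Fin 3) (Fin 3) ℤ :=
  !![1, 0, 0; 0, 0, 1; 0, 1, 0]

theorem isUnit_det_latOneU : IsUnit latOneU.det := by
  rw [show latOneU.det = -1 by decide]
  exact isUnit_neg_one

theorem transpose_permMatrix_mul_latOneU_mul_permMatrix (σ : Equiv.Perm (Fin 3)) (hσ : σ 0 = 0) :
    (σ.permMatrix ℤ)ᵀ * latOneU * σ.permMatrix ℤ = latOneU := by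
  revert σ
  decide

theorem eq_single_of_normMod_eq_zero :
    ∀ v : Fin 3 → ZMod 2, normMod latOneU v = 0 →
      v = 0 ∨ v = Pi.single 1 1 ∨ v = Pi.single 2 1 := by
  decide

theorem eq_one_of_normMod_eq_three :
    ∀ v : Fin 3 → ZMod 2, normMod latOneU v = 3 → v = 1 := by
  decide

theorem eq_nsmul_one_add_nsmul_single (v : Fin 3 → ZMod 2) :
    v = (v 0).val • 1 + (v 0 + v 1).val • Pi.single 1 1 + (v 0 + v 2).val • Pi.single 2 1 := by
  revert v
  decide

theorem exists_perm_of_preserves_normMod (ψ : (Fin 3 → ZMod 2) ≃+ (Fin 3 → ZMod 2))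
    (hψ : ∀ v, normMod latOneU (ψ v) = normMod latOneU v) :
    ∃ σ : Equiv.Perm (Fin 3), σ 0 = 0 ∧ ∀ v, ψ v = v ∘ σ := by
  have hiso : ∀ v : Fin 3 → ZMod 2, v ≠ 0 → normMod latOneU v = 0 →
      ψ v = Pi.single 1 1 ∨ ψ v = Pi.single 2 1 := fun v hv hnorm =>
    (eq_single_of_normMod_eq_zero _ ((hψ v).trans hnorm)).resolve_left
      ((map_ne_zero_iff ψ ψ.injective).2 hv)
  have hone : ψ 1 = 1 := eq_one_of_normMod_eq_three _ ((hψ 1).trans (by decide))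
  have hne : ψ (Pi.single 1 1) ≠ ψ (Pi.single 2 1) := ψ.injective.ne (by decide)
  have hspan : ∀ v, ψ v = (v 0).val • 1 + (v 0 + v 1).val • ψ (Pi.single 1 1) +
      (v 0 + v 2).val • ψ (Pi.single 2 1) := fun v => by
    conv_lhs => rw [eq_nsmul_one_add_nsmul_single v]
    simp only [map_add, map_nsmul, hone]
  rcases hiso (Pi.single 1 1) (by decide) (by decide) with h₁ | h₁ <;>
    rcases hiso (Pi.single 2 1) (by decide) (by decide) with h₂ | h₂
  · exact absurd (h₁.trans h₂.symm) hne
  · refine ⟨1, rfl, fun v => ?_⟩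
    rw [hspan, h₁, h₂]
    exact (eq_nsmul_one_add_nsmul_single v).symm
  · refine ⟨Equiv.swap 1 2, by decide, fun v => ?_⟩
    rw [hspan, h₁, h₂]
    revert v
    decide
  · exact absurd (h₁.trans h₂.symm) hne

end OneU

theorem isUnit_det_latE8 : IsUnit latE8.det := by
  have hinv : latE8 * !![
       -4,  -5,  -7, -10,  -8,  -6,  -4,  -2;
       -5,  -8, -10, -15, -12,  -9,  -6,  -3;
       -7, -10, -14, -20, -16, -12,  -8,  -4;
      -10, -15, -20, -30, -24, -18, -12,  -6;
       -8, -12, -16, -24, -20, -15, -10,  -5;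
       -6,  -9, -12, -18, -15, -12,  -8,  -4;
       -4,  -6,  -8, -12, -10,  -8,  -6,  -3;
       -2,  -3,  -4,  -6,  -5,  -4,  -3,  -2] = 1 := by
    decide
  exact (isUnit_iff_isUnit_det _).1 (IsUnit.of_mul_eq_one _ hinv)

theorem gramN_eq_dsum : gramN = dsum (2 • latOneU) latE8 := by
  have htwo : dsum !![(2 : ℤ)] (2 • latU) = 2 • latOneU := by decide
  exact congrArg (fun A : Matrix (Fin 3) (Fin 3) ℤ => dsum A latE8) htwo

theorem O_to_Oq_surjective_N'_general {n : ℕ} {B : Matrix (Fin n) (Fin n) ℤ}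
    (hB : IsUnit B.det) (φ : discGroup (dsum (2 • latOneU) B) ≃+ discGroup (dsum (2 • latOneU) B))
    (hφ : PreservesDiscForm φ) :
    ∃ P : Matrix (Fin (3 + n)) (Fin (3 + n)) ℤ, IsUnit P.det ∧
      Pᵀ * dsum (2 • latOneU) B * P = dsum (2 • latOneU) B ∧
      ∀ x y : dualLat (dsum (2 • latOneU) B),
        (y : Fin (3 + n) → ℚ) = P.map (Int.cast : ℤ → ℚ) *ᵥ (x : Fin (3 + n) → ℚ) →
          φ (dmk x) = dmk y := by
  let e := discEquiv (k := 2) isUnit_det_latOneU hB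
  obtain ⟨σ, hσ, hψ⟩ := exists_perm_of_preserves_normMod ((e.trans φ).trans e.symm)
    (normMod_discEquiv_symm_of_preserves isUnit_det_latOneU hB hφ)
  refine ⟨dsum (σ.permMatrix ℤ) 1, ?_, ?_, fun x y hxy => ?_⟩
  · rw [det_dsum, det_permutation, det_one, mul_one]
    exact (Equiv.Perm.sign σ).isUnit
  · rw [transpose_dsum, dsum_mul_dsum, dsum_mul_dsum, transpose_one, one_mul, mul_one,
      Matrix.mul_smul, Matrix.smul_mul,
      transpose_permMatrix_mul_latOneU_mul_permMatrix σ hσ]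
  · obtain ⟨v, hx, hy⟩ := exists_dmk_eq_divClass_mulVec isUnit_det_latOneU hB hxy
    rw [hx, hy, permMatrix_mulVec, ← discEquiv_reduceMod isUnit_det_latOneU hB,
      ← discEquiv_reduceMod isUnit_det_latOneU hB]
    exact e.symm_apply_eq.1 (hψ _)

/-- The natural homomorphism `O(N) → O(q_N)` is surjective for `N = ⟨2⟩ ⊕ U(2) ⊕ E8` :
every automorphism of the discriminant group preserving the discriminant quadratic form
is induced by an integral isometry `P` of `N` (which acts on `N* ⊆ ℚ¹¹` by `x ↦ Px`). -/
theorem O_to_Oq_surjective_N' :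
    ∀ φ : discGroup gramN ≃+ discGroup gramN, PreservesDiscForm φ →
      ∃ P : Matrix (Fin 11) (Fin 11) ℤ, IsUnit P.det ∧ Pᵀ * gramN * P = gramN ∧
        ∀ x y : dualLat gramN,
          (y : Fin 11 → ℚ) = (P.map (Int.cast : ℤ → ℚ)).mulVec (x : Fin 11 → ℚ) →
            φ (dmk x) = dmk y := by
  rw [gramN_eq_dsum]
  exact O_to_Oq_surjective_N'_general isUnit_det_latE8
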